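/- arXiv:2305.05030 — 5 statements merged into one kernel-verified Lean document; each statement's English description precedes it below -/
import Mathlib

section
/- Let X be an m×n real matrix and let i, j be indices such that X i j ≠ 0. Define the residual matrix Y by Y p q = X p q - (X p j * X i q) / (X i j), i.e. Y = X - (1/X(i,j)) · X(:,j) X(i,:). Then rank(Y) = rank(X) - 1. -/
/-!
Write `c = X(:,j)`. For every vector `v`, `Y v = X v - t c` with `t = (X v) i / X i j`, and
`c = X eⱼ`, so `range X = range Y ⊔ span {c}`. The `i`-th coordinate of every `Y v` vanishes while
`c i = X i j ≠ 0`; hence `c ∉ range Y`, and adjoining `c` raises the dimension by exactly one.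
-/

/-- Rank-one deflation (Theorem 1 of the paper): subtracting the rank-one
cross `(1/X(i,j)) · X(:,j) X(i,:)` from `X` reduces the rank by one. -/
theorem rank_one_deflation {m n : ℕ} (X : Matrix (Fin m) (Fin n) ℝ)
    (i : Fin m) (j : Fin n) (h : X i j ≠ 0) :
    (Matrix.of fun p q => X p q - X p j * X i q / X i j).rank = X.rank - 1 := by
  set Y : Matrix (Fin m) (Fin n) ℝ := Matrix.of fun p q => X p q - X p j * X i q / X i j with hY
  have hYv (v : Fin n → ℝ) : Y.mulVec v = X.mulVec v - (X.mulVec v i / X i j) • X.col j := by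
    ext p
    simp only [hY, Matrix.mulVec, dotProduct, Matrix.of_apply, sub_mul, Finset.sum_sub_distrib,
      Pi.sub_apply, Pi.smul_apply, smul_eq_mul, Matrix.col_apply, Finset.sum_div, Finset.sum_mul]
    congr 1
    exact Finset.sum_congr rfl fun q _ => by ring
  have hc : X.mulVec (Pi.single j 1) = X.col j := Matrix.mulVec_single_one X j
  have hnot : X.col j ∉ LinearMap.range Y.mulVecLin := by
    rintro ⟨v, hv⟩
    have hi := congrFun hv i
    rw [Matrix.mulVecLin_apply, hYv] at hi
    simp [h] at hi
    exact h hi.symm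
  have hsup : LinearMap.range X.mulVecLin =
      LinearMap.range Y.mulVecLin ⊔ Submodule.span ℝ {X.col j} := by
    apply le_antisymm
    · rintro _ ⟨v, rfl⟩
      refine Submodule.mem_sup.2 ⟨_, ⟨v, rfl⟩, (X.mulVec v i / X i j) • X.col j,
        Submodule.smul_mem _ _ (Submodule.mem_span_singleton_self _), ?_⟩
      rw [Matrix.mulVecLin_apply, hYv, Matrix.mulVecLin_apply, sub_add_cancel]
    · have hcol : X.col j ∈ LinearMap.range X.mulVecLin := ⟨Pi.single j 1, hc⟩
      refine sup_le ?_ ((Submodule.span_singleton_le_iff_mem _ _).2 hcol)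
      rintro _ ⟨v, rfl⟩
      rw [Matrix.mulVecLin_apply, hYv]
      exact Submodule.sub_mem _ ⟨v, rfl⟩ (Submodule.smul_mem _ _ hcol)
  have hc0 : X.col j ≠ 0 := fun h0 => h (congrFun h0 i)
  have hdim := Submodule.finrank_sup_add_finrank_inf_eq (LinearMap.range Y.mulVecLin)
    (Submodule.span ℝ {X.col j})
  rw [← hsup, ((Submodule.disjoint_span_singleton' hc0).2 hnot).eq_bot, finrank_bot,
    finrank_span_singleton hc0] at hdim
  simp only [Matrix.rank]
  omega
end

section
/- Let K be a field, let X be an m×n matrix over K, and let i, j be indices such that X i j ≠ 0. Define the residual matrix Y by Y p q = X p q - (X p j * X i q) / (X i j). Then rank(Y) = rank(X) - 1. -/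
/-!
The residual `Y` acts by `Y v = X v - ((X v) i / X i j) • X e_j`, which projects the column space
of `X` along the pivot column `X e_j` onto the vectors whose `i`-th coordinate vanishes. Hence the
column space of `Y` is the kernel of the `i`-th coordinate functional on the column space of `X`.
That functional is nonzero, since it takes the value `X i j` at `X e_j`, so its kernel has
codimension one.
-/

theorem deflation_mulVec {K : Type*} [Field K] {m n : ℕ}
    (X : Matrix (Fin m) (Fin n) K) (i : Fin m) (j : Fin n) (v : Fin n → K) :
    (Matrix.of fun p q => X p q - X p j * X i q / X i j).mulVec v =
      X.mulVec v - (X.mulVec v i / X i j) • X.col j := by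
  ext p
  simp only [Matrix.mulVec, dotProduct, Matrix.of_apply, Pi.sub_apply, Pi.smul_apply,
    Matrix.col_apply, smul_eq_mul, Finset.sum_div, Finset.sum_mul, ← Finset.sum_sub_distrib]
  exact Finset.sum_congr rfl fun q _ => by ring

/-- Rank-one deflation over an arbitrary field `K`. -/
theorem rank_one_deflation_field {K : Type*} [Field K] {m n : ℕ}
    (X : Matrix (Fin m) (Fin n) K) (i : Fin m) (j : Fin n) (h : X i j ≠ 0) :
    (Matrix.of fun p q => X p q - X p j * X i q / X i j).rank = X.rank - 1 := by
  set Y := Matrix.of fun p q => X p q - X p j * X i q / X i j with hY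
  let φ : LinearMap.range X.mulVecLin →ₗ[K] K :=
    (LinearMap.proj i : (Fin m → K) →ₗ[K] K).domRestrict _
  have hcol : X.col j ∈ LinearMap.range X.mulVecLin :=
    ⟨Pi.single j 1, by simp⟩
  have hφ : φ ≠ 0 := fun h0 => h (by simpa [φ] using LinearMap.congr_fun h0 ⟨X.col j, hcol⟩)
  have hker : (LinearMap.ker φ).map (LinearMap.range X.mulVecLin).subtype =
      LinearMap.range Y.mulVecLin := by
    ext w
    constructor
    · rintro ⟨⟨_, v, rfl⟩, hv, rfl⟩
      have hv : X.mulVec v i = 0 := hv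
      exact ⟨v, by simp [hY, deflation_mulVec, hv]⟩
    · rintro ⟨v, rfl⟩
      have hYv : Y.mulVec v = X.mulVec v - (X.mulVec v i / X i j) • X.col j :=
        deflation_mulVec X i j v
      refine ⟨⟨Y.mulVec v, ?_⟩, ?_, rfl⟩
      · rw [hYv]
        exact Submodule.sub_mem _ ⟨v, rfl⟩ (Submodule.smul_mem _ _ hcol)
      · change Y.mulVec v i = 0
        simp [hYv, h]
  have hrank : Module.finrank K (LinearMap.ker φ) = Y.rank := by
    rw [Matrix.rank, ← hker, Submodule.finrank_map_subtype_eq]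
  have hsum := φ.finrank_range_add_finrank_ker
  rw [LinearMap.range_eq_top.mpr (LinearMap.surjective hφ), finrank_top, Module.finrank_self,
    hrank] at hsum
  change 1 + Y.rank = X.rank at hsum
  omega
end

section
/- Let Z be an m×n real matrix, let α ∈ ℝⁿ and β ∈ ℝᵐ be vectors such that c = βᵀ Z α ≠ 0. Define W = Z - (1/c) · (Z α)(βᵀ Z), i.e. W p q = Z p q - (Z α)_p (Zᵀ β)_q / c. Then rank(W) = rank(Z) - 1. -/
/-!
Write `c = βᵀ Z α` and `W` for the deflated matrix. Then `W x = Z (x - (βᵀ Z x / c) α)`, so `W`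
kills `ker Z` and `α`; conversely `W x = 0` puts `x - (βᵀ Z x / c) α` in `ker Z`. Hence
`ker W = ker Z ⊔ span {α}`, and the sum is direct since `Z α ≠ 0`. The claim follows by
rank–nullity.
-/

open scoped Matrix

/-- Rank-one deflation with a general oblique projection: if `c = βᵀ Z α ≠ 0`
then `W = Z - (1/c) (Z α)(βᵀ Z)` has rank one less than `Z`. -/
theorem rank_one_deflation_oblique {m n : ℕ} (Z : Matrix (Fin m) (Fin n) ℝ)
    (α : Fin n → ℝ) (β : Fin m → ℝ) (hc : β ⬝ᵥ (Z *ᵥ α) ≠ 0) :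
    (Matrix.of fun p q =>
        Z p q - (Z *ᵥ α) p * (Zᵀ *ᵥ β) q / (β ⬝ᵥ (Z *ᵥ α))).rank = Z.rank - 1 := by
  set c := β ⬝ᵥ (Z *ᵥ α) with hcdef
  set W : Matrix (Fin m) (Fin n) ℝ :=
    Matrix.of fun p q => Z p q - (Z *ᵥ α) p * (Zᵀ *ᵥ β) q / c with hW
  have hWx : ∀ x, W *ᵥ x = Z *ᵥ (x - (β ⬝ᵥ (Z *ᵥ x) / c) • α) := by
    intro x
    have hWeq : W = Z - c⁻¹ • Matrix.vecMulVec (Z *ᵥ α) (Zᵀ *ᵥ β) := by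
      ext p q
      simp [hW, Matrix.vecMulVec_apply]
      ring
    have hdot : (Zᵀ *ᵥ β) ⬝ᵥ x = β ⬝ᵥ (Z *ᵥ x) := by
      rw [Matrix.mulVec_transpose, Matrix.dotProduct_mulVec]
    rw [hWeq, Matrix.sub_mulVec, Matrix.smul_mulVec, Matrix.vecMulVec_mulVec, hdot,
      Matrix.mulVec_sub, Matrix.mulVec_smul]
    ext p
    simp
    ring
  have hα : Z *ᵥ α ≠ 0 := fun h => hc (by rw [hcdef, h, dotProduct_zero])
  have hα0 : α ≠ 0 := fun h => hα (by rw [h, Matrix.mulVec_zero])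
  have hker : LinearMap.ker W.mulVecLin =
      LinearMap.ker Z.mulVecLin ⊔ Submodule.span ℝ {α} := by
    apply le_antisymm
    · intro x hx
      rw [LinearMap.mem_ker, Matrix.mulVecLin_apply, hWx] at hx
      rw [Submodule.mem_sup]
      exact ⟨_, hx, _, Submodule.smul_mem _ (β ⬝ᵥ (Z *ᵥ x) / c)
        (Submodule.mem_span_singleton_self α), sub_add_cancel _ _⟩
    · refine sup_le (fun x hx => ?_) ?_
      · rw [LinearMap.mem_ker, Matrix.mulVecLin_apply] at hx ⊢
        rw [hWx, hx]
        simp [hx]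
      · rw [Submodule.span_singleton_le_iff_mem, LinearMap.mem_ker, Matrix.mulVecLin_apply, hWx,
          ← hcdef, div_self hc, one_smul, sub_self, Matrix.mulVec_zero]
  have hinf : LinearMap.ker Z.mulVecLin ⊓ Submodule.span ℝ {α} = ⊥ := by
    rw [← disjoint_iff, Submodule.disjoint_span_singleton' hα0]
    exact hα
  have h1 := Submodule.finrank_sup_add_finrank_inf_eq
    (LinearMap.ker Z.mulVecLin) (Submodule.span ℝ {α})
  rw [hinf, finrank_bot, finrank_span_singleton hα0, ← hker] at h1
  have h2 := LinearMap.finrank_range_add_finrank_ker W.mulVecLin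
  have h3 := LinearMap.finrank_range_add_finrank_ker Z.mulVecLin
  unfold Matrix.rank
  omega
end

section
/- Let X be an m×n real matrix, A an n×k real matrix and B an m×k real matrix such that the k×k matrix R = Bᵀ X A is invertible. Then rank(X A R⁻¹ Bᵀ X) = k and rank(X - X A R⁻¹ Bᵀ X) = rank(X) - k. -/
/-! Write `R = Bᵀ X A`, `P = X A R⁻¹ Bᵀ X` and `Y = X - P`. The matrix `P` factors through `ℝᵏ`, and
`Bᵀ P A = R` has rank `k`, so `P` has rank exactly `k`. For the second claim, the column space of
`X` is the direct sum of those of `Y` and `P`. The sum is everything because `X = Y + P`, with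
`P` and hence `Y` right multiples of `X`. It is direct because `E = X A R⁻¹ Bᵀ` satisfies
`E Y = 0` and `E P = P`.
-/

open scoped Matrix

/-- If `P = X * Q` and a matrix `E` kills `X - P` and fixes `P`, then the column spaces of
`X - P` and `P` are complementary in that of `X`, so the ranks add up. -/
lemma rank_sub_add_rank_of_separating {m n : ℕ} (X P : Matrix (Fin m) (Fin n) ℝ)
    (Q : Matrix (Fin n) (Fin n) ℝ) (E : Matrix (Fin m) (Fin m) ℝ)
    (hQ : P = X * Q) (hY : E * (X - P) = 0) (hP : E * P = P) :
    (X - P).rank + P.rank = X.rank := by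
  have hdisj : LinearMap.range (X - P).mulVecLin ⊓ LinearMap.range P.mulVecLin = ⊥ := by
    rw [eq_bot_iff]
    rintro v ⟨⟨y, hy⟩, ⟨p, hp⟩⟩
    rw [Matrix.mulVecLin_apply] at hy hp
    have h0 : E *ᵥ v = 0 := by rw [← hy, Matrix.mulVec_mulVec, hY, Matrix.zero_mulVec]
    have h1 : E *ᵥ v = v := by rw [← hp, Matrix.mulVec_mulVec, hP]
    rw [Submodule.mem_bot, ← h1, h0]
  have hsup : LinearMap.range (X - P).mulVecLin ⊔ LinearMap.range P.mulVecLin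
      = LinearMap.range X.mulVecLin := by
    apply le_antisymm
    · refine sup_le ?_ ?_
      · rintro _ ⟨y, rfl⟩
        refine ⟨y - Q *ᵥ y, ?_⟩
        simp [hQ, Matrix.mulVec_sub]
      · rintro _ ⟨y, rfl⟩
        exact ⟨Q *ᵥ y, by simp [hQ]⟩
    · rintro _ ⟨y, rfl⟩
      refine Submodule.mem_sup.2 ⟨_, ⟨y, rfl⟩, _, ⟨y, rfl⟩, ?_⟩
      simp
  have h := Submodule.finrank_sup_add_finrank_inf_eq
    (LinearMap.range (X - P).mulVecLin) (LinearMap.range P.mulVecLin)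
  rw [hdisj, hsup, finrank_bot, add_zero] at h
  exact h.symm

/-- Wedderburn rank-`k` deflation ('if' direction, specialized to `U = XA`,
`V = XᵀB`): if `R = Bᵀ X A` is invertible then `X A R⁻¹ Bᵀ X` has rank `k`
and subtracting it from `X` drops the rank by exactly `k`. -/
theorem wedderburn_rank_subtraction {m n k : ℕ}
    (X : Matrix (Fin m) (Fin n) ℝ) (A : Matrix (Fin n) (Fin k) ℝ)
    (B : Matrix (Fin m) (Fin k) ℝ) (hR : IsUnit (Bᵀ * X * A)) :
    (X * A * (Bᵀ * X * A)⁻¹ * Bᵀ * X).rank = k ∧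
    (X - X * A * (Bᵀ * X * A)⁻¹ * Bᵀ * X).rank = X.rank - k := by
  have hd : IsUnit (Bᵀ * X * A).det := (Matrix.isUnit_iff_isUnit_det _).1 hR
  have hcomp : X * A * (Bᵀ * X * A)⁻¹ * Bᵀ * (X * A * (Bᵀ * X * A)⁻¹ * Bᵀ * X)
      = X * A * (Bᵀ * X * A)⁻¹ * Bᵀ * X := by
    calc _ = X * A * ((Bᵀ * X * A)⁻¹ * (Bᵀ * X * A)) * (Bᵀ * X * A)⁻¹ * Bᵀ * X := by
          simp only [Matrix.mul_assoc]
      _ = _ := by rw [Matrix.nonsing_inv_mul _ hd, Matrix.mul_one]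
  have hrank : (X * A * (Bᵀ * X * A)⁻¹ * Bᵀ * X).rank = k := by
    apply le_antisymm
    · rw [Matrix.mul_assoc _ Bᵀ X]
      exact (Matrix.rank_mul_le_left _ _).trans (Matrix.rank_le_width _)
    · have hBPA : Bᵀ * (X * A * (Bᵀ * X * A)⁻¹ * Bᵀ * X) * A = Bᵀ * X * A := by
        calc _ = (Bᵀ * X * A) * (Bᵀ * X * A)⁻¹ * (Bᵀ * X * A) := by
              simp only [Matrix.mul_assoc]
          _ = _ := by rw [Matrix.mul_nonsing_inv _ hd, Matrix.one_mul]
      calc k = (Bᵀ * X * A).rank := by rw [Matrix.rank_of_isUnit _ hR, Fintype.card_fin]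
        _ = (Bᵀ * (X * A * (Bᵀ * X * A)⁻¹ * Bᵀ * X) * A).rank := by rw [hBPA]
        _ ≤ (Bᵀ * (X * A * (Bᵀ * X * A)⁻¹ * Bᵀ * X)).rank := Matrix.rank_mul_le_left _ _
        _ ≤ _ := Matrix.rank_mul_le_right _ _
  refine ⟨hrank, ?_⟩
  have hadd := rank_sub_add_rank_of_separating X (X * A * (Bᵀ * X * A)⁻¹ * Bᵀ * X)
    (A * (Bᵀ * X * A)⁻¹ * Bᵀ * X) (X * A * (Bᵀ * X * A)⁻¹ * Bᵀ)
    (by simp only [Matrix.mul_assoc]) (by rw [Matrix.mul_sub, hcomp, sub_self]) hcomp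
  omega
end

section
/- Let n ≥ 1, and represent third-order tensors of sizes I₁ × I₂ × n and I₂ × I₄ × n as X : Fin I₁ → Fin I₂ → (ZMod n → ℝ) and Y : Fin I₂ → Fin I₄ → (ZMod n → ℝ). Define their t-product C = X * Y by (C p r) = ∑_{q : Fin I₂} (X p q) ⋆ (Y q r), where ⋆ is circular convolution on ZMod n. Then for every k : ZMod n, the complex I₁ × I₄ matrix with (p,r) entry dft(C p r) k equals the matrix product of the I₁ × I₂ matrix with (p,q) entry dft(X p q) k and the I₂ × I₄ matrix with (q,r) entry dft(Y q r) k; that is, Ĉ(:,:,k) = X̂(:,:,k) Ŷ(:,:,k). -/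
/-!
The character `j ↦ exp (-2πi j k / n)` is well defined on `ZMod n`: it is `j ↦ ψ (-(j * k))` for the
standard additive character `ψ = ZMod.stdAddChar` (`exp_eq_stdAddChar`). Additivity of `ψ`, together
with the translation `t = j + m`, gives the convolution theorem `dft (a ⋆ b) = dft a * dft b`
(`dft_conv`). Summing it over the contracted index `q`, by linearity of the transform, yields the
slice-wise matrix product.
-/

open scoped BigOperators

/-- The discrete Fourier transform on `ZMod n`:
`(dft x) k = ∑ j, x j * exp(-2πi j k / n)`. -/
noncomputable def dft {n : ℕ} [NeZero n] (x : ZMod n → ℂ) : ZMod n → ℂ :=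
  fun k => ∑ j : ZMod n,
    x j * Complex.exp (-(2 * (Real.pi : ℂ) * Complex.I * (j.val : ℂ) * (k.val : ℂ) / (n : ℂ)))

/-- Circular convolution of real tubes on `ZMod n`. -/
def conv {n : ℕ} [NeZero n] (a b : ZMod n → ℝ) : ZMod n → ℝ :=
  fun k => ∑ j : ZMod n, a j * b (k - j)

/-- The Fourier kernel, written with the representatives `val`, depends on `j` and `k` only modulo
`n`, and is the standard additive character evaluated at `-(j * k)`. -/
theorem exp_eq_stdAddChar {n : ℕ} [NeZero n] (j k : ZMod n) :
    Complex.exp (-(2 * (Real.pi : ℂ) * Complex.I * (j.val : ℂ) * (k.val : ℂ) / (n : ℂ))) =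
      ZMod.stdAddChar (-(j * k)) := by
  have h : -(j * k) = ((-((j.val : ℤ) * (k.val : ℤ)) : ℤ) : ZMod n) := by
    push_cast
    rw [ZMod.natCast_zmod_val, ZMod.natCast_zmod_val]
  rw [h, ZMod.stdAddChar_coe]
  congr 1
  push_cast
  ring

theorem dft_eq_sum_stdAddChar {n : ℕ} [NeZero n] (x : ZMod n → ℂ) (k : ZMod n) :
    dft x k = ∑ j : ZMod n, x j * ZMod.stdAddChar (-(j * k)) := by
  simp only [dft, exp_eq_stdAddChar]

/-- The convolution theorem. -/
theorem dft_conv {n : ℕ} [NeZero n] (a b : ZMod n → ℝ) (k : ZMod n) :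
    dft (fun t => ((conv a b t : ℝ) : ℂ)) k =
      dft (fun t => (a t : ℂ)) k * dft (fun t => (b t : ℂ)) k := by
  simp only [dft_eq_sum_stdAddChar, conv, Complex.ofReal_sum, Complex.ofReal_mul]
  rw [Finset.sum_mul_sum]
  simp only [Finset.sum_mul]
  rw [Finset.sum_comm]
  refine Finset.sum_congr rfl fun j _ => ?_
  rw [← Equiv.sum_comp (Equiv.addLeft j)]
  refine Finset.sum_congr rfl fun m _ => ?_
  have h : -((j + m) * k) = -(j * k) + -(m * k) := by ring
  simp only [Equiv.coe_addLeft, add_sub_cancel_left, h, AddChar.map_add_eq_mul]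
  ring

/-- The t-product becomes slice-wise matrix multiplication in the Fourier
domain: if `C = X * Y` (t-product, tube-wise `C p r = ∑ q, X p q ⋆ Y q r`)
then `Ĉ(:,:,k) = X̂(:,:,k) Ŷ(:,:,k)` for every frontal index `k`. -/
theorem tprod_fourier_slices {n I₁ I₂ I₄ : ℕ} [NeZero n]
    (X : Fin I₁ → Fin I₂ → (ZMod n → ℝ)) (Y : Fin I₂ → Fin I₄ → (ZMod n → ℝ))
    (C : Fin I₁ → Fin I₄ → (ZMod n → ℝ))
    (hC : ∀ p r, C p r = ∑ q : Fin I₂, conv (X p q) (Y q r)) (k : ZMod n) :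
    (Matrix.of fun p r => dft (fun t => ((C p r) t : ℂ)) k) =
      (Matrix.of fun p q => dft (fun t => ((X p q) t : ℂ)) k) *
        (Matrix.of fun q r => dft (fun t => ((Y q r) t : ℂ)) k) := by
  ext p r
  simp only [Matrix.mul_apply, Matrix.of_apply, ← dft_conv, hC, Finset.sum_apply,
    Complex.ofReal_sum]
  simp only [dft, Finset.sum_mul]
  exact Finset.sum_comm
end
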